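/- Let γ ∈ ℂ with Re γ > 1/2 and Im γ > 0, and set μ := γ/(1−γ). Let Q := {(z₁,z₂,z₃,z₄) ∈ ℂ⁴ : z₃ = (z₁ + 2γ·conj z₂)² and z₄ = (z₂ + 2(1 − conj γ)·conj z₁)²} and K := {(z₁,z₂,z₃,z₄) ∈ ℂ⁴ : z₃ = (1−2γ)²·z₁² and z₄ = (1 − 2·conj γ)²·z₂²}. Define M₁ := {(a, −conj a, (1−2γ)²·a², (1−2·conj γ)²·(conj a)²) : a ∈ ℂ} and M₂ := {(−μ·conj b, b, (1−2γ)²·μ²·(conj b)², (1−2·conj γ)²·b²) : b ∈ ℂ}. Then: (a) M₁ ∪ M₂ ⊆ Q ∩ K; (b) the real 2-dimensional real-linear subspaces V₁ := {(a, −conj a, 0, 0) : a ∈ ℂ} and V₂ := {(−μ·conj b, b, 0, 0) : b ∈ ℂ} of ℂ⁴ are totally real, i.e. V₁ ∩ iV₁ = {0} and V₂ ∩ iV₂ = {0}, and V₁ ∩ V₂ = {0}. -/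

import Mathlib

/-- The quadric of complex type `Q_γ ⊂ ℂ⁴`. -/
def Qset (γ : ℂ) : Set (ℂ × ℂ × ℂ × ℂ) :=
  {v | v.2.2.1 = (v.1 + 2 * γ * (starRingEnd ℂ) v.2.1) ^ 2 ∧
    v.2.2.2 = (v.2.1 + 2 * (1 - (starRingEnd ℂ) γ) * (starRingEnd ℂ) v.1) ^ 2}

/-- The attached complex 2-dimensional submanifold `K ⊂ ℂ⁴`. -/
def Kset (γ : ℂ) : Set (ℂ × ℂ × ℂ × ℂ) :=
  {v | v.2.2.1 = (1 - 2 * γ) ^ 2 * v.1 ^ 2 ∧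
    v.2.2.2 = (1 - 2 * (starRingEnd ℂ) γ) ^ 2 * v.2.1 ^ 2}

/-- The first totally real surface `M₁ ⊂ Q_γ ∩ K`. -/
def M1set (γ : ℂ) : Set (ℂ × ℂ × ℂ × ℂ) :=
  {v | ∃ a : ℂ, v = (a, -((starRingEnd ℂ) a), (1 - 2 * γ) ^ 2 * a ^ 2,
    (1 - 2 * (starRingEnd ℂ) γ) ^ 2 * ((starRingEnd ℂ) a) ^ 2)}

/-- The second totally real surface `M₂ ⊂ Q_γ ∩ K`. -/
def M2set (γ μ : ℂ) : Set (ℂ × ℂ × ℂ × ℂ) :=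
  {v | ∃ b : ℂ, v = (-(μ * (starRingEnd ℂ) b), b,
    (1 - 2 * γ) ^ 2 * μ ^ 2 * ((starRingEnd ℂ) b) ^ 2,
    (1 - 2 * (starRingEnd ℂ) γ) ^ 2 * b ^ 2)}

/-- The tangent plane `V₁` of `M₁` at `0`. -/
def V1set : Set (ℂ × ℂ × ℂ × ℂ) := {v | ∃ a : ℂ, v = (a, -((starRingEnd ℂ) a), 0, 0)}

/-- The tangent plane `V₂` of `M₂` at `0`. -/
def V2set (μ : ℂ) : Set (ℂ × ℂ × ℂ × ℂ) := {v | ∃ b : ℂ, v = (-(μ * (starRingEnd ℂ) b), b, 0, 0)}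

/-!
Put `c = conj z₂`. Over a point of `K`, either equation of `Q` says that a difference of squares
vanishes. The first difference and the conjugate of the second are `4 * γ` and `4 * (1 - γ)` times
`(z₁ + c) * ((1 - γ) * z₁ + γ * c)`, up to sign, so `Q ∩ K` is exactly the part of `K` over the
graphs `z₁ = -c` and `z₁ = -μ * c`.

The planes `z₁ = -μ * c` for distinct `μ` meet only at `0`, and multiplication by `i` exchanges the
planes of `μ` and `-μ`. So total reality is an instance of transversality of two such planes.
-/

open Complex ComplexConjugate

section TangentPlanes

variable {μ ν : ℂ} {v : ℂ × ℂ × ℂ × ℂ}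

lemma mem_V2set : v ∈ V2set μ ↔ v.1 = -(μ * conj v.2.1) ∧ v.2.2 = 0 := by
  constructor
  · rintro ⟨b, rfl⟩
    exact ⟨rfl, rfl⟩
  · obtain ⟨z₁, z₂, w⟩ := v
    rintro ⟨hz₁, hw⟩
    exact ⟨z₂, Prod.ext hz₁ (Prod.ext rfl hw)⟩

lemma V1set_eq_V2set_one : V1set = V2set 1 := by
  ext v
  constructor
  · rintro ⟨a, rfl⟩
    exact ⟨-conj a, by simp⟩
  · rintro ⟨b, rfl⟩
    exact ⟨-conj b, by simp⟩

lemma V2set_inter_V2set (h : μ ≠ ν) : V2set μ ∩ V2set ν = {0} := by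
  ext ⟨z₁, z₂, w⟩
  simp only [Set.mem_inter_iff, mem_V2set, Set.mem_singleton_iff, Prod.mk_eq_zero]
  constructor
  · rintro ⟨⟨hμ, hw⟩, hν, -⟩
    have hmul : (μ - ν) * conj z₂ = 0 := by linear_combination hμ - hν
    have hz₂ : z₂ = 0 := by simpa [sub_ne_zero.mpr h] using hmul
    exact ⟨by simp [hμ, hz₂], hz₂, hw⟩
  · rintro ⟨rfl, rfl, hw⟩
    simp [hw]

lemma image_smul_V2set {c : ℂ} (hc : c ≠ 0) (μ : ℂ) :
    (fun v : ℂ × ℂ × ℂ × ℂ => c • v) '' V2set μ = V2set (c / conj c * μ) := by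
  have hc' : conj c ≠ 0 := (map_ne_zero _).mpr hc
  have smul_point (b : ℂ) : c • (-(μ * conj b), b, (0 : ℂ), (0 : ℂ)) =
      (-(c / conj c * μ * conj (c * b)), c * b, 0, 0) := by
    simp only [Prod.smul_mk, smul_eq_mul, mul_zero, map_mul, Prod.mk.injEq, and_true]
    field_simp
  ext v
  constructor
  · rintro ⟨-, ⟨b, rfl⟩, rfl⟩
    exact ⟨c * b, smul_point b⟩
  · rintro ⟨b, rfl⟩
    refine ⟨_, ⟨b / c, rfl⟩, (smul_point (b / c)).trans ?_⟩
    rw [mul_div_cancel₀ b hc]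

lemma V2set_inter_image_I_smul (hμ : μ ≠ 0) :
    V2set μ ∩ (fun v : ℂ × ℂ × ℂ × ℂ => I • v) '' V2set μ = {0} := by
  have hI : I / conj I * μ = -μ := by simp
  rw [image_smul_V2set I_ne_zero, hI]
  exact V2set_inter_V2set (self_ne_neg.mpr hμ)

end TangentPlanes

section Intersection

variable {γ μ : ℂ} {v : ℂ × ℂ × ℂ × ℂ}

lemma mem_M2set : v ∈ M2set γ μ ↔ v ∈ Kset γ ∧ v.1 = -(μ * conj v.2.1) := by
  constructor
  · rintro ⟨b, rfl⟩
    exact ⟨⟨by ring, rfl⟩, rfl⟩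
  · obtain ⟨z₁, z₂, z₃, z₄⟩ := v
    rintro ⟨⟨hz₃, hz₄⟩, hz₁⟩
    refine ⟨z₂, Prod.ext hz₁ (Prod.ext rfl (Prod.ext ?_ hz₄))⟩
    simp only at hz₁ hz₃ ⊢
    rw [hz₃, hz₁]
    ring

lemma M1set_eq_M2set_one : M1set γ = M2set γ 1 := by
  ext v
  constructor
  · rintro ⟨a, rfl⟩
    exact ⟨-conj a, by simp⟩
  · rintro ⟨b, rfl⟩
    exact ⟨-conj b, by simp⟩

lemma mem_Qset_iff_of_mem_Kset (hv : v ∈ Kset γ) :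
    v ∈ Qset γ ↔ (v.1 + conj v.2.1) * ((1 - γ) * v.1 + γ * conj v.2.1) = 0 := by
  obtain ⟨z₁, z₂, z₃, z₄⟩ := v
  obtain ⟨rfl, rfl⟩ : z₃ = (1 - 2 * γ) ^ 2 * z₁ ^ 2 ∧ z₄ = (1 - 2 * conj γ) ^ 2 * z₂ ^ 2 := hv
  set p := (z₁ + conj z₂) * ((1 - γ) * z₁ + γ * conj z₂) with hp
  have first_eq : (1 - 2 * γ) ^ 2 * z₁ ^ 2 - (z₁ + 2 * γ * conj z₂) ^ 2 = -4 * γ * p := by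
    rw [hp]
    ring
  have second_eq : (1 - 2 * conj γ) ^ 2 * z₂ ^ 2 - (z₂ + 2 * (1 - conj γ) * conj z₁) ^ 2 =
      -4 * (1 - conj γ) * conj p := by
    simp only [hp, map_mul, map_add, map_sub, map_one, conj_conj]
    ring
  simp only [Qset, Set.mem_ofPred_eq]
  rw [← sub_eq_zero, first_eq, ← sub_eq_zero (b := (_ : ℂ) ^ 2), second_eq]
  have coeff_ne_zero : γ ≠ 0 ∨ 1 - conj γ ≠ 0 := by
    by_contra! h
    simp [h.1] at h
  simp only [neg_mul, neg_eq_zero, mul_eq_zero, OfNat.ofNat_ne_zero, false_or, map_eq_zero]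
  tauto

lemma Qset_inter_Kset (h₁ : γ ≠ 1) :
    Qset γ ∩ Kset γ = M1set γ ∪ M2set γ (γ / (1 - γ)) := by
  have h₁' : 1 - γ ≠ 0 := sub_ne_zero.mpr h₁.symm
  have second_factor (z c : ℂ) : (1 - γ) * z + γ * c = 0 ↔ z = -(γ / (1 - γ) * c) := by
    rw [eq_neg_iff_add_eq_zero]
    field_simp
    rw [mul_zero]
  ext v
  rw [M1set_eq_M2set_one, Set.mem_inter_iff, and_comm, Set.mem_union, mem_M2set, mem_M2set,
    ← and_or_left]
  refine and_congr_right fun hv => ?_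
  rw [mem_Qset_iff_of_mem_Kset hv, mul_eq_zero, second_factor,
    add_eq_zero_iff_eq_neg, one_mul]

end Intersection

theorem stmt_14_general (γ : ℂ) (h₀ : γ ≠ 0) (h_half : γ ≠ 1 / 2) (h₁ : γ ≠ 1)
    (μ : ℂ) (hμ : μ = γ / (1 - γ)) :
    (M1set γ ∪ M2set γ μ = Qset γ ∩ Kset γ) ∧
    (V1set ∩ (fun v : ℂ × ℂ × ℂ × ℂ => I • v) '' V1set = {0}) ∧
    (V2set μ ∩ (fun v : ℂ × ℂ × ℂ × ℂ => I • v) '' V2set μ = {0}) ∧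
    (V1set ∩ V2set μ = {0}) := by
  have h₁' : 1 - γ ≠ 0 := sub_ne_zero.mpr h₁.symm
  have hμ₀ : μ ≠ 0 := hμ ▸ div_ne_zero h₀ h₁'
  have hμ₁ : 1 ≠ μ := by
    rw [hμ, ne_comm, Ne, div_eq_one_iff_eq h₁']
    exact fun h => h_half (by linear_combination h / 2)
  rw [V1set_eq_V2set_one]
  refine ⟨?_, V2set_inter_image_I_smul one_ne_zero, V2set_inter_image_I_smul hμ₀,
    V2set_inter_V2set hμ₁⟩
  rw [hμ, Qset_inter_Kset h₁]

/-- With `Re γ > 1/2`, `Im γ > 0` and `μ = γ/(1−γ)`: `M₁ ∪ M₂ ⊆ Q_γ ∩ K`, the planes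
`V₁, V₂` are totally real (`V ∩ iV = {0}`), and `V₁ ∩ V₂ = {0}`. -/
theorem stmt_14 (γ : ℂ) (hre : 1 / 2 < γ.re) (him : 0 < γ.im)
    (μ : ℂ) (hμ : μ = γ / (1 - γ)) :
    (M1set γ ∪ M2set γ μ ⊆ Qset γ ∩ Kset γ) ∧
    (V1set ∩ (fun v : ℂ × ℂ × ℂ × ℂ => Complex.I • v) '' V1set = {0}) ∧
    (V2set μ ∩ (fun v : ℂ × ℂ × ℂ × ℂ => Complex.I • v) '' V2set μ = {0}) ∧
    (V1set ∩ V2set μ = {0}) := by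
  have him_ne (r : ℝ) : γ ≠ r := fun h => by simp [h] at him
  obtain ⟨hQK, hV⟩ := stmt_14_general γ (mod_cast him_ne 0) (by simpa using him_ne (1 / 2))
    (mod_cast him_ne 1) μ hμ
  exact ⟨hQK.subset, hV⟩
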